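/- Let G be a tree (a connected acyclic simple graph) with vertex set V and graph metric d, let v ∈ V, and let r ≥ 1 and k ≥ 1 be integers. On the annulus A_k = {x ∈ V : k·r ≤ d(v,x) ≤ (k+1)·r}, define x ∼_k y if and only if the median m of the triple x, y, v satisfies 2·d(v,m) ≥ (2k−1)·r. Then: (1) every equivalence class of ∼_k has diameter ≤ 3r; (2) any two distinct equivalence classes of ∼_k are at distance ≥ r from each other; (3) if x ∈ A_k and y ∈ A_l with l ≥ k + 2, then d(x,y) ≥ r. -/

import Mathlib

/-- `m` is the median (center of the tripod) of the vertices `x`, `y`, `v` in the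
graph `G`, with respect to the graph metric. -/
def IsTreeMedian {V : Type*} (G : SimpleGraph V) (x y v m : V) : Prop :=
  G.dist x y = G.dist x m + G.dist m y ∧
  G.dist x v = G.dist x m + G.dist m v ∧
  G.dist y v = G.dist y m + G.dist m v

open SimpleGraph in
theorem tree_path_len {V : Type*} {G : SimpleGraph V} (hG : G.IsTree) {a b : V}
    (p : G.Walk a b) (hp : p.IsPath) : p.length = G.dist a b := by
  obtain ⟨q, hq, hl⟩ := hG.1.exists_path_of_dist a b
  rw [(hG.existsUnique_path a b).unique hp hq, hl]

open SimpleGraph in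
theorem tree_between {V : Type*} {G : SimpleGraph V} (hG : G.IsTree) {a b w : V}
    (p : G.Walk a b) (hp : p.IsPath) (hw : w ∈ p.support) :
    G.dist a w + G.dist w b = G.dist a b := by
  classical
  rw [← tree_path_len hG p hp, ← tree_path_len hG _ (hp.takeUntil hw),
    ← tree_path_len hG _ (hp.dropUntil hw), ← Walk.length_append, Walk.take_spec]

open SimpleGraph in
theorem tree_join {V : Type*} {G : SimpleGraph V} (hG : G.IsTree) {a b c : V}
    (p : G.Walk a b) (q : G.Walk b c) (hp : p.IsPath) (hq : q.IsPath)
    (h : ∀ w, w ∈ p.support → w ∈ q.support → w = b) :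
    G.dist a b + G.dist b c = G.dist a c := by
  have hpath : (p.append q).IsPath := by
    rw [Walk.isPath_def, Walk.support_append, List.nodup_append]
    refine ⟨hp.support_nodup, hq.support_nodup.tail, ?_⟩
    intro w hw w' hw' e
    subst e
    have h1 := h w hw (List.mem_of_mem_tail hw')
    subst h1
    have := hq.support_nodup
    rw [Walk.support_eq_cons] at this
    exact (List.nodup_cons.1 this).1 hw'
  rw [← tree_path_len hG _ hpath, Walk.length_append, tree_path_len hG p hp,
    tree_path_len hG q hq]

open SimpleGraph in
theorem tree_median {V : Type*} {G : SimpleGraph V} (hG : G.IsTree) (x y v : V) :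
    ∃ m, IsTreeMedian G x y v m := by
  classical
  obtain ⟨p, hp, -⟩ := hG.1.exists_path_of_dist x y
  obtain ⟨m, hm, hmin⟩ := p.support.toFinset.exists_min_image (fun w => G.dist v w)
    ⟨x, by simp⟩
  simp only [List.mem_toFinset] at hm hmin
  obtain ⟨q, hq, -⟩ := hG.1.exists_path_of_dist v m
  have key : ∀ w, w ∈ q.support → w ∈ p.support → w = m := by
    intro w hw hw'
    have h1 := tree_between hG q hq hw
    have h2 := hmin w hw'
    exact hG.1.dist_eq_zero_iff.1 (by omega)
  have h0 := tree_between hG p hp hm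
  have h1 := tree_join hG q (p.dropUntil m hm) hq (hp.dropUntil hm)
    (fun w a b => key w a (p.support_dropUntil_subset hm b))
  have h2 := tree_join hG q (p.takeUntil m hm).reverse hq (hp.takeUntil hm).reverse
    (fun w a b => key w a (p.support_takeUntil_subset hm (by simpa using b)))
  refine ⟨m, h0.symm, ?_, ?_⟩
  · rw [G.dist_comm (u := x) (v := v), G.dist_comm (u := x) (v := m),
      G.dist_comm (u := m) (v := v)]; omega
  · rw [G.dist_comm (u := y) (v := v), G.dist_comm (u := y) (v := m),
      G.dist_comm (u := m) (v := v)]; omega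

open SimpleGraph in
theorem tree_interval {V : Type*} {G : SimpleGraph V} (hG : G.IsTree) {v y m n : V}
    (hm : G.dist v m + G.dist m y = G.dist v y) (hn : G.dist v n + G.dist n y = G.dist v y)
    (hmn : G.dist v m ≤ G.dist v n) : G.dist v m + G.dist m n = G.dist v n := by
  obtain ⟨a, ha, hal⟩ := hG.1.exists_path_of_dist v m
  obtain ⟨b, hb, hbl⟩ := hG.1.exists_path_of_dist m y
  obtain ⟨c, hc, hcl⟩ := hG.1.exists_path_of_dist v n
  obtain ⟨d, hd, hdl⟩ := hG.1.exists_path_of_dist n y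
  have h1 : (a.append b).IsPath := Walk.isPath_of_length_eq_dist _ (by
    rw [Walk.length_append]; omega)
  have h2 : (c.append d).IsPath := Walk.isPath_of_length_eq_dist _ (by
    rw [Walk.length_append]; omega)
  have he := (hG.existsUnique_path v y).unique h1 h2
  have hmem : n ∈ (a.append b).support := by
    rw [he, Walk.mem_support_append_iff]; exact Or.inl c.end_mem_support
  rw [Walk.mem_support_append_iff] at hmem
  rcases hmem with h | h
  · have h3 := tree_between hG a ha h
    rw [G.dist_comm (u := m) (v := n)]
    omega
  · have h3 := tree_between hG b hb h
    omega

theorem tree_hyp_aux {V : Type*} {G : SimpleGraph V} (hG : G.IsTree) {v x y z m n : V}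
    (hm : IsTreeMedian G x y v m) (hn : IsTreeMedian G y z v n)
    (h : G.dist v m ≤ G.dist v n) :
    G.dist x z + 2 * G.dist v m ≤ G.dist x v + G.dist z v := by
  obtain ⟨a1, a2, a3⟩ := hm
  obtain ⟨b1, b2, b3⟩ := hn
  have e1 := G.dist_comm (u := m) (v := v)
  have e2 := G.dist_comm (u := n) (v := v)
  have e3 := G.dist_comm (u := y) (v := v)
  have e4 := G.dist_comm (u := y) (v := m)
  have e5 := G.dist_comm (u := y) (v := n)
  have e6 := G.dist_comm (u := z) (v := n)
  have h1 := tree_interval hG (v := v) (y := y) (m := m) (n := n) (by omega) (by omega) h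
  have h2 := hG.1.dist_triangle (u := x) (v := m) (w := z)
  have h3 := hG.1.dist_triangle (u := m) (v := n) (w := z)
  omega

theorem median_symm {V : Type*} {G : SimpleGraph V} {v x y m : V}
    (hm : IsTreeMedian G x y v m) : IsTreeMedian G y x v m := by
  obtain ⟨a1, a2, a3⟩ := hm
  refine ⟨?_, a3, a2⟩
  rw [G.dist_comm (u := y) (v := x), G.dist_comm (u := y) (v := m),
    G.dist_comm (u := m) (v := x)]; omega

/-- The Gromov product inequality of a tree. -/
theorem median_trans {V : Type*} {G : SimpleGraph V} (hG : G.IsTree) {v x y z : V} (c : ℤ)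
    (h1 : ∃ m, IsTreeMedian G x y v m ∧ c ≤ 2 * (G.dist v m : ℤ))
    (h2 : ∃ m, IsTreeMedian G y z v m ∧ c ≤ 2 * (G.dist v m : ℤ)) :
    ∃ m, IsTreeMedian G x z v m ∧ c ≤ 2 * (G.dist v m : ℤ) := by
  obtain ⟨m, hm, hmc⟩ := h1
  obtain ⟨n, hn, hnc⟩ := h2
  obtain ⟨w, hw⟩ := tree_median hG x z v
  refine ⟨w, hw, ?_⟩
  obtain ⟨a1, a2, a3⟩ := hw
  have e1 := G.dist_comm (u := w) (v := v)
  have e2 := G.dist_comm (u := w) (v := z)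
  have e3 := G.dist_comm (u := x) (v := z)
  rcases le_total (G.dist v m) (G.dist v n) with h | h
  · have := tree_hyp_aux hG hm hn h
    omega
  · have := tree_hyp_aux hG (median_symm hn) (median_symm hm) h
    omega

/-- Properties of the equivalence classes of the relation `∼_k` on the annulus
`A_k = {x : k·r ≤ d(v,x) ≤ (k+1)·r}` of a tree, where `x ∼_k y` iff the median `m`
of `x, y, v` satisfies `2·d(v,m) ≥ (2k−1)·r`:
(1) every class has diameter ≤ 3r;
(2) distinct classes are at distance ≥ r;
(3) points of `A_k` and `A_l` with `l ≥ k+2` are at distance ≥ r. -/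
theorem stmt_3 {V : Type*} (G : SimpleGraph V) (hG : G.IsTree) (v : V)
    (r k : ℕ) (hr : 1 ≤ r) (hk : 1 ≤ k) :
    let A : ℕ → Set V := fun j => {x | j * r ≤ G.dist v x ∧ G.dist v x ≤ (j + 1) * r}
    let rel : V → V → Prop := fun x y =>
      ∃ m : V, IsTreeMedian G x y v m ∧
        (2 * (k : ℤ) - 1) * r ≤ 2 * (G.dist v m : ℤ)
    let cls : V → Set V := fun x => {y ∈ A k | rel x y}
    -- (1) every equivalence class has diameter ≤ 3r
    (∀ x ∈ A k, ∀ y ∈ cls x, ∀ z ∈ cls x, G.dist y z ≤ 3 * r) ∧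
    -- (2) distinct equivalence classes are at distance ≥ r
    (∀ x ∈ A k, ∀ x' ∈ A k, cls x ≠ cls x' →
      ∀ y ∈ cls x, ∀ z ∈ cls x', r ≤ G.dist y z) ∧
    -- (3) points in annuli whose indices differ by at least 2 are at distance ≥ r
    (∀ l : ℕ, k + 2 ≤ l → ∀ x ∈ A k, ∀ y ∈ A l, r ≤ G.dist x y) := by
  intro A rel cls
  have symm : ∀ x y, rel x y → rel y x := fun x y ⟨m, hm, h⟩ => ⟨m, median_symm hm, h⟩
  have trans : ∀ x y z, rel x y → rel y z → rel x z := fun x y z h1 h2 =>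
    median_trans hG _ h1 h2
  refine ⟨?_, ?_, ?_⟩
  · intro x hx y hy z hz
    obtain ⟨m, ⟨a1, a2, a3⟩, hc⟩ := trans y x z (symm _ _ hy.2) hz.2
    have hy1 : G.dist v y ≤ (k + 1) * r := hy.1.2
    have hz1 : G.dist v z ≤ (k + 1) * r := hz.1.2
    have e1 := G.dist_comm (u := m) (v := v)
    have e2 := G.dist_comm (u := m) (v := z)
    have e3 := G.dist_comm (u := y) (v := v)
    have e4 := G.dist_comm (u := z) (v := v)
    zify at *
    linarith
  · intro x hx x' hx' hne y hy z hz
    by_contra hlt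
    apply hne
    have hyz : rel y z := by
      obtain ⟨m, hm⟩ := tree_median hG y z v
      refine ⟨m, hm, ?_⟩
      obtain ⟨a1, a2, a3⟩ := hm
      have hy1 : k * r ≤ G.dist v y := hy.1.1
      have hz1 : k * r ≤ G.dist v z := hz.1.1
      have e1 := G.dist_comm (u := m) (v := v)
      have e2 := G.dist_comm (u := m) (v := z)
      have e3 := G.dist_comm (u := y) (v := v)
      have e4 := G.dist_comm (u := z) (v := v)
      push Not at hlt
      zify at *
      linarith
    have hxx : rel x x' := trans _ _ _ hy.2 (trans _ _ _ hyz (symm _ _ hz.2))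
    ext w
    exact ⟨fun h => ⟨h.1, trans _ _ _ (symm _ _ hxx) h.2⟩,
      fun h => ⟨h.1, trans _ _ _ hxx h.2⟩⟩
  · intro l hl x hx y hy
    have h1 : G.dist v x ≤ (k + 1) * r := hx.2
    have h2 : l * r ≤ G.dist v y := hy.1
    have h3 := Nat.mul_le_mul_right r hl
    have h4 := hG.1.dist_triangle (u := v) (v := x) (w := y)
    linarith
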